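/- Let $n_u, n_s \ge 1$, and let $I_u \subseteq \mathbb{R}^{n_u}$ and $I_s \subseteq \mathbb{R}^{n_s}$ be compact disks of dimension $n_u$ and $n_s$, i.e. subsets homeomorphic to the closed unit ball of $\mathbb{R}^{n_u}$ and of $\mathbb{R}^{n_s}$, respectively. Set $R = I_u \times I_s \subseteq \mathbb{R}^{n_u} \times \mathbb{R}^{n_s}$. Call a set of the form $\{(u,\psi(u)) : u \in I_u\}$ with $\psi : I_u \to I_s$ continuous a horizontal slice of $R$. Let $f : \mathbb{R}^{n_u} \times \mathbb{R}^{n_s} \to \mathbb{R}^{n_u} \times \mathbb{R}^{n_s}$ be a homeomorphism and let $N \ge 1$. Suppose that for every $s \in I_s$ there exist pairwise disjoint horizontal slices $h_1(s), \dots, h_N(s)$ of $R$ such that $f(I_u \times \{s\}) \cap R = h_1(s) \cup \dots \cup h_N(s)$. Then there exists a nonempty compact set $\Lambda \subseteq \bigcap_{n \in \mathbb{Z}} f^n(R)$ with $f(\Lambda) = \Lambda$, together with a continuous surjection $\pi : \Lambda \to \{1,\dots,N\}^{\mathbb{Z}}$ (the full shift space with the product topology) satisfying $\pi(f(x)) =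 \sigma(\pi(x))$ for all $x \in \Lambda$, where $\sigma$ is the left shift map $\sigma(\omega)(k) = \omega(k+1)$. -/

import Mathlib

/-- A compact `n`-dimensional disk in `ℝⁿ`: a subset homeomorphic to the closed unit ball
of `ℝⁿ`. -/
def IsCompactDisk {n : ℕ} (D : Set (EuclideanSpace ℝ (Fin n))) : Prop :=
  Nonempty (D ≃ₜ Metric.closedBall (0 : EuclideanSpace ℝ (Fin n)) 1)

/-- The horizontal disk `I_u × {s}` at level `s`. -/
def horizontalDisk {E F : Type*} (Iu : Set E) (s : F) : Set (E × F) :=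
  Iu ×ˢ {s}

/-- A horizontal slice of `I_u × I_s`: the graph of a continuous function `I_u → I_s`. -/
def IsHorizontalSlice {E F : Type*} [TopologicalSpace E] [TopologicalSpace F]
    (Iu : Set E) (Is : Set F) (h : Set (E × F)) : Prop :=
  ∃ ψ : Iu → Is, Continuous ψ ∧ h = {p | ∃ u : Iu, p = ((u : E), (ψ u : F))}

/-- The left shift on the full shift space on `N` symbols. -/
def fullShift (N : ℕ) (ω : ℤ → Fin N) : ℤ → Fin N :=
  fun k => ω (k + 1)

open MeasureTheory Metric Set
open scoped Topology

section Brouwer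

variable {E : Type*} [NormedAddCommGroup E] [InnerProductSpace ℝ E] [FiniteDimensional ℝ E]

/-- The value at `1` of `t ↦ det (1 + t L)` is a fixed affine combination of its values at
finitely many prescribed small parameters. -/
theorem exists_weights_det_one_add_smul (E : Type*) [NormedAddCommGroup E] [NormedSpace ℝ E]
    [FiniteDimensional ℝ E] {δ : ℝ} (hδ : 0 < δ) :
    ∃ (s : Finset ℝ) (c : ℝ → ℝ), (∀ t ∈ s, 0 < t ∧ t < δ) ∧ ∑ t ∈ s, c t = 1 ∧
      ∀ L : E →L[ℝ] E, (1 + L).det = ∑ t ∈ s, c t * (1 + t • L).det := by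
  classical
  obtain ⟨s, hs, hcard⟩ :=
    (Ioo_infinite hδ).exists_subset_card_eq (Module.finrank ℝ E + 1)
  have hne : s.Nonempty := Finset.card_pos.1 (by omega)
  refine ⟨s, fun t => (Lagrange.basis s id t).eval 1, fun t ht => hs ht, ?_, fun L => ?_⟩
  · rw [← Polynomial.eval_finsetSum, Lagrange.sum_basis Function.injective_id.injOn hne]
    simp
  · let b := Module.finBasis ℝ E
    let M := LinearMap.toMatrix b b (L : E →ₗ[ℝ] E)
    let q : Polynomial ℝ :=
      (((Polynomial.X : Polynomial ℝ) • M.map Polynomial.C + (1 : Matrix _ _ ℝ).map Polynomial.C)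
        : Matrix _ _ (Polynomial ℝ)).det
    have hq : ∀ t : ℝ, q.eval t = (1 + t • L).det := by
      intro t
      have h1 : q.eval t = (t • M + 1).det := by
        rw [← Polynomial.coe_evalRingHom, RingHom.map_det]
        congr 1
        ext i j
        by_cases h : i = j <;> simp [h, mul_comm t]
      have h2 : LinearMap.toMatrix b b ((1 + t • L : E →L[ℝ] E) : E →ₗ[ℝ] E) = t • M + 1 := by
        rw [show ((1 + t • L : E →L[ℝ] E) : E →ₗ[ℝ] E) = t • (L : E →ₗ[ℝ] E) + 1 by
          ext v; simp [add_comm]]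
        simp [M]
      rw [h1, ← h2, LinearMap.det_toMatrix]
    have hdeg : q.degree < s.card := by
      refine lt_of_le_of_lt Polynomial.degree_le_natDegree ?_
      have := Polynomial.natDegree_det_X_add_C_le M 1
      rw [Fintype.card_fin] at this
      rw [hcard]
      exact_mod_cast Nat.lt_succ_of_le this
    have h := Lagrange.eq_interpolate (v := id) (s := s) Function.injective_id.injOn hdeg
    have h1 := hq 1
    rw [one_smul] at h1
    rw [← h1, h, Lagrange.interpolate_apply, Polynomial.eval_finsetSum]
    refine Finset.sum_congr rfl fun t _ => ?_
    rw [← hq t]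
    simp [mul_comm]

theorem det_one_add_pos_of_norm_lt_one {E : Type*} [NormedAddCommGroup E] [NormedSpace ℝ E]
    [FiniteDimensional ℝ E] (L : E →L[ℝ] E) (hL : ‖L‖ < 1) : 0 < (1 + L).det := by
  have hne : ∀ t ∈ Icc (0 : ℝ) 1, (1 + t • L).det ≠ 0 := by
    intro t ht h0
    have hn : ‖-(t • L)‖ < 1 := by
      rw [norm_neg, norm_smul, Real.norm_of_nonneg ht.1]
      exact lt_of_le_of_lt (mul_le_of_le_one_left (norm_nonneg _) ht.2) hL
    have hu := isUnit_one_sub_of_norm_lt_one hn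
    rw [sub_neg_eq_add] at hu
    have : IsUnit ((1 + t • L).det) :=
      (hu.map (ContinuousLinearMap.toLinearMapRingHom : (E →L[ℝ] E) →+* (E →ₗ[ℝ] E))).map
        (LinearMap.det : (E →ₗ[ℝ] E) →* ℝ)
    exact this.ne_zero h0
  have hcont : ContinuousOn (fun t : ℝ => (1 + t • L).det) (Icc 0 1) :=
    (ContinuousLinearMap.continuous_det.comp (by fun_prop)).continuousOn
  by_contra hle
  push Not at hle
  have h0 : (1 + (0 : ℝ) • L).det = 1 := by
    rw [zero_smul, add_zero]
    exact LinearMap.det_id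
  have := intermediate_value_Icc' zero_le_one hcont
  obtain ⟨t, ht, ht0⟩ := this (show (0 : ℝ) ∈ _ by
    refine ⟨by simpa using hle, ?_⟩
    exact h0.symm ▸ zero_le_one)
  exact hne t ht ht0

/-- A perturbation of the identity by a contraction is bijective. -/
theorem bijective_add_of_lipschitzWith {E : Type*} [NormedAddCommGroup E] [CompleteSpace E]
    {h : E → E} {K : NNReal} (hK : K < 1) (hh : LipschitzWith K h) :
    Function.Bijective fun x => x + h x := by
  have hc : ∀ y, ContractingWith K fun x => y - h x := fun y =>
    ⟨hK, LipschitzWith.of_dist_le_mul fun a b => by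
      rw [dist_sub_left]; exact hh.dist_le_mul a b⟩
  refine ⟨fun a b hab => ?_, fun y => ⟨(hc y).fixedPoint, ?_⟩⟩
  · have ha : Function.IsFixedPt (fun x => (a + h a) - h x) a := by simp [Function.IsFixedPt]
    have hb : Function.IsFixedPt (fun x => (a + h a) - h x) b := by
      simp only [Function.IsFixedPt] at *
      rw [show a + h a = b + h b from hab]; simp
    rw [(hc _).fixedPoint_unique ha, (hc _).fixedPoint_unique hb]
  · have := (hc y).fixedPoint_isFixedPt
    exact (sub_eq_iff_eq_add.1 this).symm

/-- There is no Lipschitz `C¹` map into a sphere which extends the radial projection. -/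
theorem not_exists_contDiff_retraction_sphere {r : E → E} {R : ℝ} (hR : 0 < R)
    (hr : ContDiff ℝ 1 r) {K : NNReal} (hK : LipschitzWith K r) (hsph : ∀ x, ‖r x‖ = R)
    (hrad : ∀ x, R < ‖x‖ → r x = (R / ‖x‖) • x) : False := by
  let _ : MeasurableSpace E := borel E
  have _ : BorelSpace E := ⟨rfl⟩
  let μ : Measure E := Measure.addHaar
  have hdiff : ∀ x, HasFDerivAt r (fderiv ℝ r x) x := fun x =>
    (hr.differentiable one_ne_zero x).hasFDerivAt
  have hdet0 : ∀ x, (fderiv ℝ r x).det = 0 := by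
    intro x
    by_contra hne
    have hsurj : Function.Surjective (fderiv ℝ r x) := by
      have := LinearMap.isUnit_iff_isUnit_det (f := (fderiv ℝ r x : E →ₗ[ℝ] E)) |>.2
        (isUnit_iff_ne_zero.2 hne)
      exact ((Module.End.isUnit_iff _).1 this).2
    obtain ⟨v, hv⟩ := hsurj (r x)
    have h1 : HasFDerivAt (fun y => ‖r y‖ ^ 2) (2 • (innerSL ℝ (r x)).comp (fderiv ℝ r x)) x :=
      (hdiff x).norm_sq
    have h2 : HasFDerivAt (fun y => ‖r y‖ ^ 2) (0 : E →L[ℝ] ℝ) x := by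
      simp only [hsph]
      exact hasFDerivAt_const _ _
    have h3 := congrArg (fun l : E →L[ℝ] ℝ => l v) (h1.unique h2)
    simp [hv, hsph, hR.ne'] at h3
  have hLip : LipschitzWith (K + 1) fun x => r x - x := hK.sub LipschitzWith.id
  obtain ⟨s, c, hs, hc, hw⟩ := exists_weights_det_one_add_smul E
    (δ := min 1 ((K + 1 : ℝ)⁻¹)) (by positivity)
  let D : E → E →L[ℝ] E := fun x => fderiv ℝ r x - 1
  have hDcont : Continuous D := (hr.continuous_fderiv one_ne_zero).sub continuous_const
  have hDnorm : ∀ x, ‖D x‖ ≤ K + 1 := by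
    intro x
    have : fderiv ℝ (fun x => r x - x) x = D x :=
      ((hdiff x).sub (hasFDerivAt_id x)).fderiv
    rw [← this]
    exact_mod_cast norm_fderiv_le_of_lipschitz ℝ hLip
  have hdetcont : ∀ t : ℝ, Continuous fun x => (1 + t • D x).det := fun t =>
    ContinuousLinearMap.continuous_det.comp (by fun_prop)
  have hint : ∀ t : ℝ, IntegrableOn (fun x => (1 + t • D x).det) (closedBall 0 R) μ := fun t =>
    (hdetcont t).continuousOn.integrableOn_compact (isCompact_closedBall 0 R)
  have hvol : ∀ t ∈ s, ∫ x in closedBall 0 R, (1 + t • D x).det ∂μ = μ.real (closedBall 0 R) := by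
    intro t ht
    obtain ⟨ht0, ht1⟩ := hs t ht
    have htK : t * (K + 1) < 1 := by
      have := (lt_min_iff.1 ht1).2
      rwa [lt_inv_comm₀ ht0 (by positivity), ← one_div, lt_div_iff₀ ht0, mul_comm] at this
    have ht1 : t < 1 := (lt_min_iff.1 ht1).1
    let G : E → E := fun x => x + t • (r x - x)
    have hbij : Function.Bijective G := by
      refine bijective_add_of_lipschitzWith (K := t.toNNReal * (K + 1)) ?_ ?_
      · rw [← NNReal.coe_lt_coe]
        push_cast
        rwa [Real.coe_toNNReal _ ht0.le]
      · refine LipschitzWith.of_dist_le_mul fun a b => ?_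
        rw [dist_smul₀, Real.norm_of_nonneg ht0.le]
        have := mul_le_mul_of_nonneg_left (hLip.dist_le_mul a b) ht0.le
        push_cast at this ⊢
        rwa [Real.coe_toNNReal _ ht0.le, mul_assoc]
    have hG : ∀ x, G x = (1 - t) • x + t • r x := by
      intro x; simp only [G]; module
    have himg : G '' closedBall 0 R = closedBall 0 R := by
      ext y
      constructor
      · rintro ⟨x, hx, rfl⟩
        rw [mem_closedBall_zero_iff] at hx ⊢
        rw [hG]
        calc _ ≤ ‖(1 - t) • x‖ + ‖t • r x‖ := norm_add_le _ _
          _ = (1 - t) * ‖x‖ + t * R := by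
            rw [norm_smul, norm_smul, hsph, Real.norm_of_nonneg ht0.le,
              Real.norm_of_nonneg (by linarith)]
          _ ≤ (1 - t) * R + t * R := by gcongr
          _ = R := by ring
      · intro hy
        obtain ⟨x, rfl⟩ := hbij.2 y
        refine ⟨x, ?_, rfl⟩
        by_contra hx
        rw [mem_closedBall_zero_iff, not_le] at hx
        rw [mem_closedBall_zero_iff] at hy
        have hx0 : 0 < ‖x‖ := hR.trans hx
        rw [hG, hrad x hx, smul_smul, ← add_smul, norm_smul, Real.norm_of_nonneg
          (add_nonneg (by linarith) (by positivity)), add_mul] at hy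
        have : t * (R / ‖x‖) * ‖x‖ = t * R := by field_simp
        rw [this] at hy
        nlinarith
    have hder : ∀ x, HasFDerivAt G (1 + t • D x) x := fun x =>
      (hasFDerivAt_id x).add (((hdiff x).sub (hasFDerivAt_id x)).const_smul t)
    have hpos : ∀ x, 0 < (1 + t • D x).det := by
      intro x
      apply det_one_add_pos_of_norm_lt_one
      rw [norm_smul, Real.norm_of_nonneg ht0.le]
      exact lt_of_le_of_lt (mul_le_mul_of_nonneg_left (hDnorm x) ht0.le) htK
    have hchange := lintegral_abs_det_fderiv_eq_addHaar_image μ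
      (isClosed_closedBall (x := (0 : E)) (ε := R)).measurableSet
      (fun x _ => (hder x).hasFDerivWithinAt) hbij.1.injOn
    rw [himg] at hchange
    rw [integral_eq_lintegral_of_nonneg_ae (Filter.Eventually.of_forall fun x => (hpos x).le)
      (hdetcont t).aestronglyMeasurable, Measure.real, ← hchange]
    simp only [abs_of_pos (hpos _)]
  have hzero : ∀ x, ∑ t ∈ s, c t * (1 + t • D x).det = 0 := by
    intro x
    rw [← hw, show 1 + D x = fderiv ℝ r x by simp [D], hdet0]
  have h1 : ∫ x in closedBall 0 R, ∑ t ∈ s, c t * (1 + t • D x).det ∂μ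
      = μ.real (closedBall 0 R) := by
    rw [integral_finsetSum _ fun t _ => (hint t).const_mul (c t)]
    simp only [integral_const_mul]
    rw [Finset.sum_congr rfl fun t ht => by rw [hvol t ht], ← Finset.sum_mul, hc, one_mul]
  simp only [hzero, integral_zero] at h1
  have h2 : 0 < μ (closedBall 0 R) := measure_closedBall_pos μ 0 hR
  have h3 : μ (closedBall 0 R) < ⊤ := measure_closedBall_lt_top
  rw [Measure.real, eq_comm, ENNReal.toReal_eq_zero_iff] at h1
  rcases h1 with h | h
  · exact h2.ne' h
  · exact h3.ne h

/-- A `C¹` self-map of Euclidean space which is the identity outside a ball has a zero. -/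
theorem exists_zero_of_contDiff_of_eq_id_outside {H : E → E} {R : ℝ} (hR : 0 < R)
    (hH : ContDiff ℝ 1 H) (hid : ∀ x, R ≤ ‖x‖ → H x = x) : ∃ x, H x = 0 := by
  by_contra hne
  push Not at hne
  obtain ⟨ε, hε, hεH⟩ : ∃ ε > 0, ∀ x, ε ≤ ‖H x‖ := by
    obtain ⟨x₀, -, hx₀⟩ := (isCompact_closedBall (0 : E) R).exists_isMinOn
      ⟨0, mem_closedBall_self hR.le⟩ hH.continuous.norm.continuousOn
    refine ⟨min ‖H x₀‖ R, lt_min (norm_pos_iff.2 (hne x₀)) hR, fun x => ?_⟩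
    by_cases hx : R ≤ ‖x‖
    · rw [hid x hx]; exact (min_le_right _ _).trans hx
    · exact (min_le_left _ _).trans (hx₀ (mem_closedBall_zero_iff.2 (not_le.1 hx).le))
  obtain ⟨K, hK⟩ : ∃ K, LipschitzWith K H := by
    have hsupp : HasCompactSupport fun x => H x - x := by
      refine HasCompactSupport.of_support_subset_isCompact (isCompact_closedBall 0 R) fun x hx => ?_
      by_contra h
      rw [mem_closedBall_zero_iff, not_le] at h
      exact hx (by simp [hid x h.le])
    obtain ⟨C, hC⟩ := ContDiff.lipschitzWith_of_hasCompactSupport hsupp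
      (hH.sub contDiff_id) one_ne_zero
    exact ⟨C + 1, by simpa using hC.add LipschitzWith.id⟩
  refine not_exists_contDiff_retraction_sphere (r := fun x => (R / ‖H x‖) • H x) hR
    (contDiff_const.div (hH.norm ℝ hne) (fun x => norm_ne_zero_iff.2 (hne x)) |>.smul hH)
    (K := R.toNNReal * (2 * ε.toNNReal⁻¹ * K)) ?_ (fun x => ?_) (fun x hx => by rw [hid x hx.le])
  · refine LipschitzWith.of_dist_le_mul fun a b => ?_
    have ha := norm_pos_iff.2 (hne a)
    have hb := norm_pos_iff.2 (hne b)
    have key : (R / ‖H a‖) • H a - (R / ‖H b‖) • H b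
        = (R / ‖H a‖) • ((H a - H b) + ((‖H b‖ - ‖H a‖) / ‖H b‖) • H b) := by
      rw [smul_add, smul_sub, smul_smul, sub_add, ← sub_smul]
      congr 2
      field_simp
      ring
    rw [dist_eq_norm, key, norm_smul, Real.norm_of_nonneg (by positivity)]
    have h1 : ‖((‖H b‖ - ‖H a‖) / ‖H b‖) • H b‖ ≤ ‖H a - H b‖ := by
      rw [norm_smul, norm_div, norm_norm, div_mul_cancel₀ _ hb.ne', norm_sub_rev (H a)]
      exact abs_norm_sub_norm_le _ _
    have h2 : ‖H a - H b‖ ≤ K * dist a b := by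
      rw [← dist_eq_norm]; exact hK.dist_le_mul a b
    calc _ ≤ (R / ‖H a‖) * (‖H a - H b‖ + ‖H a - H b‖) := by
          gcongr
          exact (norm_add_le _ _).trans (by gcongr)
      _ ≤ (R / ε) * (K * dist a b + K * dist a b) := by
          gcongr
          exact hεH a
      _ = _ := by
          push_cast
          rw [Real.coe_toNNReal _ hR.le, Real.coe_toNNReal _ hε.le]
          ring
  · rw [norm_smul, norm_div, norm_norm, div_mul_cancel₀ _ (norm_ne_zero_iff.2 (hne x)),
      Real.norm_of_nonneg hR.le]

/-- **Brouwer's fixed point theorem** for bounded continuous self-maps of Euclidean space. -/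
theorem exists_fixedPoint_of_norm_le {F : E → E} (hF : Continuous F) {M : ℝ}
    (hM : ∀ x, ‖F x‖ ≤ M) : ∃ x, F x = x := by
  by_contra hne
  push Not at hne
  have hM0 : 0 ≤ M := (norm_nonneg _).trans (hM 0)
  obtain ⟨x₀, -, hx₀⟩ := (isCompact_closedBall (0 : E) (M + 2)).exists_isMinOn
    ⟨0, mem_closedBall_self (by linarith)⟩ (hF.sub continuous_id).norm.continuousOn
  let ε := min ‖F x₀ - x₀‖ 1
  have hε : 0 < ε := lt_min (norm_pos_iff.2 (sub_ne_zero.2 (hne x₀))) one_pos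
  obtain ⟨g, hg, hgF, -⟩ := hF.exists_contDiff_approx 1 (ε := fun _ => ε) continuous_const
    fun _ => hε
  let χ : ContDiffBump (0 : E) := ⟨M + 2, M + 3, by linarith, by linarith⟩
  obtain ⟨x, hx⟩ := exists_zero_of_contDiff_of_eq_id_outside
    (H := fun x => x - χ x • g x) (R := M + 3) (by linarith)
    (contDiff_id.sub (χ.contDiff.smul hg)) (fun x hx => by
      rw [χ.zero_of_le_dist (by simpa using hx)]; simp)
  have hx : x = χ x • g x := sub_eq_zero.1 hx
  have hgx := hgF x
  rw [dist_eq_norm] at hgx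
  by_cases h : ‖x‖ ≤ M + 2
  · rw [χ.one_of_mem_closedBall (by simpa using h), one_smul] at hx
    have h1 : ‖F x₀ - x₀‖ ≤ ‖F x - x‖ := hx₀ (mem_closedBall_zero_iff.2 h)
    rw [← hx, norm_sub_rev] at hgx
    exact absurd (hgx.trans_le (min_le_left _ _)) (not_lt.2 h1)
  · have h1 : ‖g x‖ ≤ M + 1 := by
      calc ‖g x‖ = ‖F x + (g x - F x)‖ := by simp
        _ ≤ M + 1 := (norm_add_le _ _).trans
          (add_le_add (hM x) (hgx.le.trans (min_le_right _ _)))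
    have h2 : ‖x‖ ≤ ‖g x‖ := by
      conv_lhs => rw [hx]
      rw [norm_smul, Real.norm_of_nonneg χ.nonneg]
      exact mul_le_of_le_one_left (norm_nonneg _) χ.le_one
    linarith

end Brouwer

/-- A compact retract of a finite-dimensional space has the fixed point property. -/
theorem exists_fixedPoint_of_retract {V Y : Type*} [NormedAddCommGroup V] [NormedSpace ℝ V]
    [FiniteDimensional ℝ V] [TopologicalSpace Y] [CompactSpace Y] {i : Y → V} {ρ : V → Y}
    (hi : Continuous i) (hρ : Continuous ρ) (hρi : Function.LeftInverse ρ i)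
    {T : Y → Y} (hT : Continuous T) : ∃ y, T y = y := by
  let e : V ≃L[ℝ] EuclideanSpace ℝ (Fin (Module.finrank ℝ V)) :=
    ContinuousLinearEquiv.ofFinrankEq (by simp)
  have hcont : Continuous fun y => e (i y) := e.continuous.comp hi
  obtain ⟨M, hM⟩ := (isCompact_range hcont).isBounded.exists_norm_le
  obtain ⟨x, hx⟩ := exists_fixedPoint_of_norm_le (F := fun x => e (i (T (ρ (e.symm x)))))
    (hcont.comp (hT.comp (hρ.comp e.symm.continuous))) (M := M) fun x => hM _ ⟨_, rfl⟩
  refine ⟨ρ (e.symm x), ?_⟩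
  conv_rhs => rw [← hx]
  rw [e.symm_apply_apply, hρi]

section StableInvariance

/-- The radial retraction of a normed space onto its closed unit ball. -/
noncomputable def radialRetraction (E : Type*) [NormedAddCommGroup E] [NormedSpace ℝ E] (x : E) :
    closedBall (0 : E) 1 :=
  ⟨(max 1 ‖x‖)⁻¹ • x, by
    rw [mem_closedBall_zero_iff, norm_smul, norm_inv,
      Real.norm_of_nonneg (zero_le_one.trans (le_max_left _ _)),
      inv_mul_le_one₀ (lt_of_lt_of_le one_pos (le_max_left _ _))]
    exact le_max_right _ _⟩

theorem continuous_radialRetraction (E : Type*) [NormedAddCommGroup E] [NormedSpace ℝ E] :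
    Continuous (radialRetraction E) := by
  refine Continuous.subtype_mk (Continuous.smul (Continuous.inv₀ (by fun_prop) fun x => ?_)
    continuous_id) _
  exact (lt_of_lt_of_le one_pos (le_max_left _ _)).ne'

theorem radialRetraction_coe {E : Type*} [NormedAddCommGroup E] [NormedSpace ℝ E]
    (x : closedBall (0 : E) 1) : radialRetraction E x = x := by
  apply Subtype.ext
  have : ‖(x : E)‖ ≤ 1 := mem_closedBall_zero_iff.1 x.2
  simp [radialRetraction, max_eq_left this]

variable {E : Type*} [NormedAddCommGroup E] [InnerProductSpace ℝ E] [FiniteDimensional ℝ E]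

/-- Stable form of invariance of domain: the centre of an embedded ball is hit by every continuous
map that is uniformly close to the embedding. -/
theorem exists_mem_range_of_dist_lt {φ₀ : closedBall (0 : E) 1 → E} (hφ₀ : Continuous φ₀)
    (hinj : Function.Injective φ₀) :
    ∃ c : E, ∃ δ > 0, ∀ φ : closedBall (0 : E) 1 → E, Continuous φ →
      (∀ x, dist (φ x) (φ₀ x) < δ) → c ∈ range φ := by
  let _ : MeasurableSpace E := borel E
  have _ : BorelSpace E := ⟨rfl⟩
  let μ : Measure E := Measure.addHaar
  have hemb : Topology.IsClosedEmbedding φ₀ := hφ₀.isClosedEmbedding hinj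
  obtain ⟨G, hG⟩ := ContinuousMap.exists_extension (Y := E) hemb
    ⟨Subtype.val, continuous_subtype_val⟩
  have hG : ∀ x, G (φ₀ x) = x := fun x => congrArg (fun k => k x) hG
  let o : closedBall (0 : E) 1 := ⟨0, by simp⟩
  let c := φ₀ o
  have hGc : G c = 0 := hG o
  obtain ⟨ε, hε, hεG⟩ : ∃ ε > 0, ∀ y, ‖y - c‖ ≤ ε → ‖G y‖ ≤ 1 / 10 := by
    obtain ⟨ε, hε, h⟩ := Metric.continuous_iff.1 G.continuous c (1 / 10) (by norm_num)
    refine ⟨ε / 2, by positivity, fun y hy => ?_⟩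
    have := h y (by rw [dist_eq_norm]; linarith)
    rw [hGc, dist_zero_right] at this
    exact this.le
  obtain ⟨η, hη, hη1, hηφ⟩ : ∃ η > 0, η ≤ (1 / 10 : ℝ) ∧
      ∀ x : closedBall (0 : E) 1, ‖(x : E)‖ < η → ‖φ₀ x - c‖ < ε / 2 := by
    obtain ⟨η, hη, h⟩ := Metric.continuous_iff.1 hφ₀ o (ε / 2) (by positivity)
    refine ⟨min η (1 / 10), by positivity, min_le_right _ _, fun x hx => ?_⟩
    rw [← dist_eq_norm]
    refine h x ?_
    rw [Subtype.dist_eq, dist_zero_right]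
    exact hx.trans_le (min_le_left _ _)
  obtain ⟨δ, hδ, hδε, hδG⟩ : ∃ δ > 0, δ ≤ ε / 2 ∧
      ∀ (x : closedBall (0 : E) 1) (y : E), dist y (φ₀ x) < δ → ‖G y - x‖ < η / 2 := by
    have h := (isCompact_range hφ₀).uniformContinuousAt_of_continuousAt G
      (fun a _ => G.continuous.continuousAt) (dist_mem_uniformity (half_pos hη))
    obtain ⟨δ, hδ, h⟩ := Metric.mem_uniformity_dist.1 h
    refine ⟨min δ (ε / 2), by positivity, min_le_right _ _, fun x y hy => ?_⟩
    have := h (a := φ₀ x) (b := y) (by rw [dist_comm]; exact hy.trans_le (min_le_left _ _))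
      ⟨x, rfl⟩
    rw [mem_ofPred_eq, hG, dist_comm, dist_eq_norm] at this
    exact this
  refine ⟨c, δ, hδ, fun φ hφ hclose => ?_⟩
  by_contra hc
  have hc : ∀ x, 0 < ‖φ x - c‖ := fun x =>
    norm_pos_iff.2 (sub_ne_zero.2 fun h => hc ⟨x, h⟩)
  obtain ⟨P, hP, hPG, hPsph⟩ : ∃ P : E → E, Continuous P ∧ (∀ y, ‖P y - G y‖ < η / 4) ∧
      ∀ y, ‖y - c‖ = ε → P y ≠ 0 := by
    obtain ⟨Q, hQ, hQG, -⟩ := G.continuous.exists_contDiff_approx 1 (ε := fun _ => η / 8)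
      continuous_const fun _ => by positivity
    have hnull : μ (Q '' sphere c ε) = 0 :=
      addHaar_image_eq_zero_of_differentiableOn_of_addHaar_eq_zero μ
        (hQ.differentiable (by simp)).differentiableOn
        (Measure.addHaar_sphere_of_ne_zero μ c hε.ne')
    obtain ⟨w, hw, hwQ⟩ : ∃ w ∈ ball (0 : E) (η / 8), w ∉ Q '' sphere c ε := by
      by_contra hcon
      push Not at hcon
      exact (measure_ball_pos μ 0 (by positivity : 0 < η / 8)).ne'
        (measure_mono_null hcon hnull)
    refine ⟨fun y => Q y - w, hQ.continuous.sub continuous_const, fun y => ?_, fun y hy h => ?_⟩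
    · have h1 := hQG y
      rw [dist_eq_norm] at h1
      rw [mem_ball_zero_iff] at hw
      calc ‖Q y - w - G y‖ = ‖(Q y - G y) - w‖ := by congr 1; abel
        _ ≤ ‖Q y - G y‖ + ‖w‖ := norm_sub_le _ _
        _ < η / 4 := by linarith
    · exact hwQ ⟨y, by rwa [mem_sphere_iff_norm], sub_eq_zero.1 h⟩
  let Ψ : closedBall (0 : E) 1 → E := fun x => c + max (ε / ‖φ x - c‖) 1 • (φ x - c)
  have hΨ : Continuous Ψ := by
    refine continuous_const.add (Continuous.smul (Continuous.max (Continuous.div continuous_const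
      (by fun_prop) fun x => (hc x).ne') continuous_const) (by fun_prop))
  have hΨfar : ∀ x, ε ≤ ‖φ x - c‖ → Ψ x = φ x := by
    intro x hx
    have : max (ε / ‖φ x - c‖) 1 = 1 := max_eq_right ((div_le_one (hc x)).2 hx)
    simp [Ψ, this]
  have hΨnear : ∀ x, ‖φ x - c‖ < ε → ‖Ψ x - c‖ = ε := by
    intro x hx
    have : max (ε / ‖φ x - c‖) 1 = ε / ‖φ x - c‖ := max_eq_left ((one_le_div (hc x)).2 hx.le)
    simp only [Ψ, this, add_sub_cancel_left]
    rw [norm_smul, norm_div, norm_norm, div_mul_cancel₀ _ (hc x).ne', Real.norm_of_nonneg hε.le]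
  have hne : ∀ x, P (Ψ x) ≠ 0 := by
    intro x
    by_cases hx : ε ≤ ‖φ x - c‖
    · rw [hΨfar x hx]
      intro h0
      have h1 : η ≤ ‖(x : E)‖ := by
        by_contra hlt
        have h2 := hηφ x (not_le.1 hlt)
        have h3 := hclose x
        rw [dist_eq_norm] at h3
        have h4 := norm_add_le (φ x - φ₀ x) (φ₀ x - c)
        rw [sub_add_sub_cancel] at h4
        linarith
      have h2 := hδG x (φ x) (hclose x)
      have h3 := hPG (φ x)
      rw [h0, zero_sub, norm_neg] at h3
      have h4 := norm_sub_norm_le (x : E) (G (φ x))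
      rw [norm_sub_rev] at h4
      linarith
    · exact hPsph _ (hΨnear x (not_le.1 hx))
  have hbound : ∀ x : closedBall (0 : E) 1, ‖(x : E) - P (Ψ x)‖ ≤ 1 := by
    intro x
    have h2 := hδG x (φ x) (hclose x)
    have h3 := hPG (Ψ x)
    have e1 : (x : E) - P (Ψ x) = -(G (φ x) - x) - (P (Ψ x) - G (Ψ x)) + (G (φ x) - G (Ψ x)) := by
      abel
    have h5 : ‖G (φ x) - G (Ψ x)‖ ≤ 1 / 5 := by
      by_cases hx : ε ≤ ‖φ x - c‖
      · rw [hΨfar x hx]; simp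
      · have h6 := hεG _ (hΨnear x (not_le.1 hx)).le
        have h7 := hεG _ (not_le.1 hx).le
        exact (norm_sub_le _ _).trans (by linarith)
    have h8 := norm_add_le (-(G (φ x) - x) - (P (Ψ x) - G (Ψ x))) (G (φ x) - G (Ψ x))
    have h9 := norm_sub_le (-(G (φ x) - x)) (P (Ψ x) - G (Ψ x))
    rw [norm_neg] at h9
    rw [e1]
    linarith
  obtain ⟨x, hx⟩ := exists_fixedPoint_of_retract continuous_subtype_val
    (continuous_radialRetraction E) radialRetraction_coe
    (T := fun x : closedBall (0 : E) 1 =>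
      ⟨(x : E) - P (Ψ x), mem_closedBall_zero_iff.2 (hbound x)⟩)
    (Continuous.subtype_mk (continuous_subtype_val.sub (hP.comp hΨ)) _)
  have := congrArg Subtype.val hx
  exact hne x (by simpa using this)

end StableInvariance

section Covering

/-- Any two continuous self-maps of a disk close to a given embedding have intersecting images. -/
theorem exists_apply_eq_apply_of_dist_lt {E : Type*} [NormedAddCommGroup E]
    [InnerProductSpace ℝ E] [FiniteDimensional ℝ E] {D : Set E} (e : D ≃ₜ closedBall (0 : E) 1)
    {φ₀ : D → D} (hφ₀ : Continuous φ₀) (hinj : Function.Injective φ₀) :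
    ∃ δ > 0, ∀ φ φ' : D → D, Continuous φ → Continuous φ' → (∀ v, dist (φ v) (φ₀ v) < δ) →
      (∀ v, dist (φ' v) (φ₀ v) < δ) → ∃ v v', φ v = φ' v' := by
  obtain ⟨c, δ, hδ, h⟩ := exists_mem_range_of_dist_lt (φ₀ := fun x => (φ₀ (e.symm x) : E))
    (by fun_prop) (Subtype.val_injective.comp (hinj.comp e.symm.injective))
  refine ⟨δ, hδ, fun φ φ' hφ hφ' hd hd' => ?_⟩
  obtain ⟨x, hx⟩ := h (fun x => (φ (e.symm x) : E)) (by fun_prop) fun x => hd _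
  obtain ⟨x', hx'⟩ := h (fun x => (φ' (e.symm x) : E)) (by fun_prop) fun x => hd' _
  exact ⟨e.symm x, e.symm x', Subtype.ext (hx.trans hx'.symm)⟩

/-- A locally injective continuous map between compact Hausdorff spaces all of whose fibres have
the same finite cardinality is a covering map. -/
theorem isCoveringMap_of_card_fiber {X Y : Type*} [TopologicalSpace X] [TopologicalSpace Y]
    [CompactSpace X] [T2Space X] [T2Space Y] {p : X → Y} (hp : Continuous p) {N : ℕ}
    (hfib : ∀ y, ∃ q : Fin N → X, Function.Injective q ∧ ∀ x, p x = y ↔ ∃ i, q i = x)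
    (hinj : ∀ x, ∃ U ∈ 𝓝 x, InjOn p U) : IsCoveringMap p := by
  have hopen : IsOpenMap p := by
    refine isOpenMap_iff_nhds_le.2 fun z W hW => ?_
    obtain ⟨q, -, hqfib⟩ := hfib (p z)
    obtain ⟨i₀, hi₀⟩ := (hqfib z).1 rfl
    have hU : ∀ i, ∃ U, IsOpen U ∧ q i ∈ U ∧ InjOn p U ∧ (i = i₀ → U ⊆ p ⁻¹' W) := by
      intro i
      obtain ⟨U, hU, hUinj⟩ := hinj (q i)
      by_cases h : i = i₀
      · obtain ⟨V, hV, hVo, hVq⟩ := mem_nhds_iff.1 (Filter.inter_mem hU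
          (show p ⁻¹' W ∈ 𝓝 (q i) by rw [h, hi₀]; exact hW))
        exact ⟨V, hVo, hVq, hUinj.mono fun x hx => (hV hx).1, fun _ x hx => (hV hx).2⟩
      · obtain ⟨V, hV, hVo, hVq⟩ := mem_nhds_iff.1 hU
        exact ⟨V, hVo, hVq, hUinj.mono hV, fun h' => absurd h' h⟩
    choose U hUo hUq hUinj hUW using hU
    have hclosed : IsClosed (p '' (⋃ i, U i)ᶜ) :=
      hp.isClosedMap _ (isOpen_iUnion hUo).isClosed_compl
    have hmem : (p '' (⋃ i, U i)ᶜ)ᶜ ∈ 𝓝 (p z) := by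
      refine hclosed.isOpen_compl.mem_nhds ?_
      rintro ⟨x, hx, hxz⟩
      obtain ⟨i, rfl⟩ := (hqfib x).1 hxz
      exact hx (mem_iUnion.2 ⟨i, hUq i⟩)
    refine Filter.mem_of_superset hmem fun y hy => ?_
    obtain ⟨q', hq'inj, hq'fib⟩ := hfib y
    have hq'y : ∀ j, p (q' j) = y := fun j => (hq'fib _).2 ⟨j, rfl⟩
    have hcov : ∀ j, ∃ i, q' j ∈ U i := by
      intro j
      by_contra hcon
      exact hy ⟨q' j, fun h => hcon (mem_iUnion.1 h), hq'y j⟩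
    choose k hk using hcov
    have hkinj : Function.Injective k := fun a b hab =>
      hq'inj (hUinj (k a) (hk a) (hab ▸ hk b) ((hq'y a).trans (hq'y b).symm))
    obtain ⟨j, hj⟩ := (Finite.injective_iff_surjective.1 hkinj) i₀
    have := hUW (k j) hj (hk j)
    rwa [mem_preimage, hq'y] at this
  refine isLocalHomeomorph_iff_isCoveringMap.1
    (isLocalHomeomorph_iff_isOpenEmbedding_restrict.2 fun x => ?_)
  obtain ⟨U, hU, hUinj⟩ := hinj x
  obtain ⟨V, hV, hVo, hVx⟩ := mem_nhds_iff.1 hU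
  exact ⟨V, hVo.mem_nhds hVx, .of_continuous_injective_isOpenMap
    (hp.comp continuous_subtype_val) (injOn_iff_injective.1 (hUinj.mono hV))
    (hopen.comp hVo.isOpenMap_subtype_val)⟩

/-- A covering map with `N`-point fibres over a contractible space is trivial: its total space is
the disjoint union of the images of `N` global sections. -/
theorem IsCoveringMap.exists_sections {X Y : Type*} [TopologicalSpace X] [TopologicalSpace Y]
    [ContractibleSpace Y] {p : X → Y} (hp : IsCoveringMap p) {N : ℕ}
    (hfib : ∀ y, ∃ q : Fin N → X, Function.Injective q ∧ ∀ x, p x = y ↔ ∃ i, q i = x) :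
    ∃ σ : Fin N → Y → X, (∀ i, Continuous (σ i)) ∧ (∀ i y, p (σ i y) = y) ∧
      (∀ i j y y', σ i y = σ j y' → i = j) ∧ ∀ x, ∃ i, σ i (p x) = x := by
  obtain ⟨y₁, ⟨H⟩⟩ := id_nullhomotopic Y
  obtain ⟨q, hqinj, hqfib⟩ := hfib y₁
  have hq : ∀ i, p (q i) = y₁ := fun i => (hqfib _).2 ⟨i, rfl⟩
  have h0 : ∀ i (y : Y), H.symm.toContinuousMap (0, y) = p (ContinuousMap.const Y (q i) y) := by
    intro i y
    simp [hq]
  let Γ := fun i => hp.liftHomotopy H.symm.toContinuousMap (ContinuousMap.const Y (q i)) (h0 i)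
  have hΓ : ∀ i, p ∘ Γ i = H.symm.toContinuousMap := fun i => hp.liftHomotopy_lifts ..
  have hΓ0 : ∀ i y, Γ i (0, y) = q i := fun i y => hp.liftHomotopy_zero ..
  have hsec : ∀ i y, p (Γ i (1, y)) = y := by
    intro i y
    have := congrFun (hΓ i) (1, y)
    simpa using this
  have hdisj : ∀ i j y y', Γ i (1, y) = Γ j (1, y') → i = j := by
    intro i j y y' h
    obtain rfl : y = y' := by rw [← hsec i y, h, hsec]
    have := hp.eq_of_comp_eq (Γ i).continuous (Γ j).continuous ((hΓ i).trans (hΓ j).symm) (1, y) h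
    apply hqinj
    rw [← hΓ0 i y, ← hΓ0 j y, this]
  refine ⟨fun i y => Γ i (1, y), fun i => by fun_prop, hsec, hdisj, fun x => ?_⟩
  obtain ⟨q', hq'inj, hq'fib⟩ := hfib (p x)
  choose k hk using fun i => (hq'fib (Γ i (1, p x))).1 (hsec i (p x))
  have hkinj : Function.Injective k := fun a b hab =>
    hdisj a b (p x) (p x) (by rw [← hk a, ← hk b, hab])
  obtain ⟨j, hj⟩ := (hq'fib x).1 rfl
  obtain ⟨i, rfl⟩ := (Finite.injective_iff_surjective.1 hkinj) j
  exact ⟨i, (hk i).symm.trans hj⟩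

/-- Suppose that every horizontal level of a closed set `X ⊆ A × S` is the disjoint union of
the images of `N` continuous sections of `g : X → A`, and that nearby sections must intersect.
Then `x ↦ (g x, x.2)` is locally injective. -/
theorem exists_nhds_injOn_of_sections {A S : Type*} [MetricSpace A] [CompactSpace A]
    [PreconnectedSpace A] [TopologicalSpace S] [CompactSpace S] [T2Space S] {X : Set (A × S)}
    (hX : IsClosed X) {g : X → A} (hg : Continuous g) {N : ℕ}
    (hsec : ∀ s, ∃ q : Fin N → A → A, (∀ i, Continuous (q i)) ∧
      (∀ i v, ∃ h : (q i v, s) ∈ X, g ⟨_, h⟩ = v) ∧ (∀ i j v, q i v = q j v → i = j) ∧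
      ∀ x : X, x.1.2 = s → ∃ i, x.1.1 = q i (g x))
    (hstable : ∀ φ₀ : A → A, Continuous φ₀ → Function.Injective φ₀ →
      ∃ δ > 0, ∀ φ φ' : A → A, Continuous φ → Continuous φ' → (∀ v, dist (φ v) (φ₀ v) < δ) →
        (∀ v, dist (φ' v) (φ₀ v) < δ) → ∃ v v', φ v = φ' v') (z : X) :
    ∃ U ∈ 𝓝 z, InjOn (fun x : X => (g x, x.1.2)) U := by
  have _ : CompactSpace X := isCompact_iff_compactSpace.1 hX.isCompact
  obtain ⟨q₀, hq₀c, hq₀s, hq₀d, hq₀e⟩ := hsec z.1.2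
  obtain ⟨j, hj⟩ := hq₀e z rfl
  have hq₀inj : Function.Injective (q₀ j) := by
    intro v v' h
    obtain ⟨h1, h2⟩ := hq₀s j v
    obtain ⟨h1', h2'⟩ := hq₀s j v'
    rw [← h2, ← h2']
    congr 3
  obtain ⟨δ, hδ, hstab⟩ := hstable (q₀ j) (hq₀c j) hq₀inj
  let d : X → ℝ := fun x => dist x.1.1 (q₀ j (g x))
  have hd : Continuous d := by
    have := hq₀c j
    fun_prop
  have hdz : d z = 0 := by simp only [d, ← hj, dist_self]
  obtain ⟨η, hη, hηδ, hgap⟩ : ∃ η > 0, η ≤ δ ∧ ∀ x : X, x.1.2 = z.1.2 → d x ≠ η := by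
    have hK : IsCompact {x : X | x.1.2 = z.1.2 ∧ ∃ i, i ≠ j ∧ x.1.1 = q₀ i (g x)} := by
      have hset : {x : X | x.1.2 = z.1.2 ∧ ∃ i, i ≠ j ∧ x.1.1 = q₀ i (g x)} =
          ⋃ i ∈ {i | i ≠ j}, {x : X | x.1.2 = z.1.2 ∧ x.1.1 = q₀ i (g x)} := by
        ext x; simp
      rw [hset]
      refine (Set.toFinite _).isCompact_biUnion fun i _ => IsClosed.isCompact ?_
      have := hq₀c i
      exact (isClosed_eq (by fun_prop) continuous_const).inter
        (isClosed_eq (by fun_prop) (by fun_prop))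
    have hpos : ∀ x ∈ {x : X | x.1.2 = z.1.2 ∧ ∃ i, i ≠ j ∧ x.1.1 = q₀ i (g x)}, 0 < d x := by
      rintro x ⟨-, i, hij, hx⟩
      refine dist_pos.2 fun h => hij (hq₀d i j (g x) (hx.symm.trans h))
    obtain ⟨a, ha, hle⟩ : ∃ a > 0,
        ∀ x ∈ {x : X | x.1.2 = z.1.2 ∧ ∃ i, i ≠ j ∧ x.1.1 = q₀ i (g x)}, a ≤ d x := by
      rcases Set.eq_empty_or_nonempty
        {x : X | x.1.2 = z.1.2 ∧ ∃ i, i ≠ j ∧ x.1.1 = q₀ i (g x)} with h | h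
      · exact ⟨1, one_pos, fun x hx => by rw [h] at hx; exact hx.elim⟩
      · obtain ⟨x₀, hx₀, hmin⟩ := hK.exists_isMinOn h hd.continuousOn
        exact ⟨d x₀, hpos x₀ hx₀, fun x hx => hmin hx⟩
    refine ⟨min (a / 2) δ, by positivity, min_le_right _ _, fun x hx hdx => ?_⟩
    obtain ⟨i, hi⟩ := hq₀e x hx
    by_cases hij : i = j
    · have : d x = 0 := by rw [hij] at hi; simp only [d, ← hi, dist_self]
      have : 0 < min (a / 2) δ := by positivity
      linarith
    · have h1 := hle x ⟨hx, i, hij, hi⟩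
      have h2 := min_le_left (a / 2) δ
      linarith
  have hVclosed : IsClosed ((fun x : X => x.1.2) '' {x | d x = η}) :=
    ((isClosed_eq hd continuous_const).isCompact.image (by fun_prop)).isClosed
  let V := ((fun x : X => x.1.2) '' {x | d x = η})ᶜ
  have hzV : z.1.2 ∈ V := by
    rintro ⟨x, hx, hxz⟩
    exact hgap x hxz hx
  have hclose : ∀ x : X, x.1.2 ∈ V → d x < η → ∀ q : A → A, Continuous q →
      (∀ v, ∃ h : (q v, x.1.2) ∈ X, g ⟨_, h⟩ = v) → x.1.1 = q (g x) →
      ∀ v, dist (q v) (q₀ j v) < δ := by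
    intro x hxV hx q hq hqs hxq v
    choose hqX hgq using hqs
    have hcont : Continuous fun v => d ⟨(q v, x.1.2), hqX v⟩ :=
      hd.comp (Continuous.subtype_mk (by fun_prop) _)
    have hval : ∀ v, d ⟨(q v, x.1.2), hqX v⟩ = dist (q v) (q₀ j v) := by
      intro v
      simp only [d, hgq]
    refine lt_of_lt_of_le ?_ hηδ
    rw [← hval]
    by_contra hlt
    rw [not_lt] at hlt
    have hstart : d ⟨(q (g x), x.1.2), hqX (g x)⟩ < η := by
      rw [hval, ← hxq]; exact hx
    obtain ⟨w, hw⟩ := mem_range_of_exists_le_of_exists_ge hcont ⟨_, hstart.le⟩ ⟨v, hlt⟩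
    exact hxV ⟨⟨(q w, x.1.2), hqX w⟩, hw, rfl⟩
  refine ⟨{x | d x < η ∧ x.1.2 ∈ V}, ?_, ?_⟩
  · refine IsOpen.mem_nhds ((isOpen_lt hd continuous_const).inter
      (hVclosed.isOpen_compl.preimage (by fun_prop))) ⟨by rw [hdz]; exact hη, hzV⟩
  · rintro x ⟨hx, hxV⟩ y ⟨hy, hyV⟩ hxy
    obtain ⟨hgxy, hsxy⟩ := Prod.mk.inj hxy
    obtain ⟨q, hqc, hqs, hqd, hqe⟩ := hsec x.1.2
    obtain ⟨i, hi⟩ := hqe x rfl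
    obtain ⟨k, hk⟩ := hqe y hsxy.symm
    obtain ⟨v, v', hvv⟩ := hstab (q i) (q k) (hqc i) (hqc k)
      (hclose x hxV hx (q i) (hqc i) (hqs i) hi)
      (hclose y hyV hy (q k) (hqc k) (by rw [← hsxy]; exact hqs k) hk)
    obtain rfl : v = v' := by
      obtain ⟨h1, h2⟩ := hqs i v
      obtain ⟨h1', h2'⟩ := hqs k v'
      rw [← h2, ← h2']
      congr 3
    obtain rfl := hqd i k v hvv
    exact Subtype.ext (Prod.ext (by rw [hi, hk, hgxy]) hsxy)

end Covering

section Dynamics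

/-- If every periodic itinerary through pairwise disjoint compact sets `C i` is realised by a
periodic orbit, then the maximal invariant subset of `⋃ i, C i` factors onto the full shift. -/
theorem exists_semiconj_fullShift {Z : Type*} [TopologicalSpace Z] [T2Space Z] (f : Z ≃ₜ Z)
    {N : ℕ} (hN : 1 ≤ N) {C : Fin N → Set Z} (hC : ∀ i, IsCompact (C i))
    (hdisj : ∀ i j x, x ∈ C i → x ∈ C j → i = j)
    (hper : ∀ (M : ℕ) [NeZero M] (w : ZMod M → Fin N),
      ∃ x : ZMod M → Z, ∀ k, x k ∈ C (w k) ∧ f (x k) = x (k + 1)) :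
    ∃ Λ : Set Z, Λ.Nonempty ∧ IsCompact Λ ∧ (∀ x ∈ Λ, ∀ n : ℤ, (f ^ n) x ∈ ⋃ i, C i) ∧
      f '' Λ = Λ ∧ ∃ (hΛ : MapsTo f Λ Λ) (π : Λ → (ℤ → Fin N)), Continuous π ∧
        Function.Surjective π ∧ Function.Semiconj π (hΛ.restrict f Λ Λ) (fullShift N) := by
  have hsucc : ∀ (n : ℤ) (x : Z), (f ^ (n + 1)) x = (f ^ n) (f x) := fun n x => by
    rw [zpow_add_one]; rfl
  have hpred : ∀ (n : ℤ) (x : Z), (f ^ (n - 1)) x = (f ^ n) (f.symm x) := fun n x => by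
    rw [zpow_sub_one]; rfl
  have hzero : ∀ x : Z, (f ^ (0 : ℤ)) x = x := fun x => by rw [zpow_zero]; rfl
  let Λ : Set Z := {x | ∀ n : ℤ, (f ^ n) x ∈ ⋃ i, C i}
  have hUcomp : IsCompact (⋃ i, C i) := isCompact_iUnion hC
  have hΛeq : Λ = ⋂ n : ℤ, (f ^ n) ⁻¹' ⋃ i, C i := by ext; simp [Λ]
  have hΛ : MapsTo f Λ Λ := fun x hx n => by rw [← hsucc]; exact hx _
  have hΛcomp : IsCompact Λ := by
    refine hUcomp.of_isClosed_subset ?_ fun x hx => by simpa [hzero] using hx 0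
    rw [hΛeq]
    exact isClosed_iInter fun n => hUcomp.isClosed.preimage (f ^ n).continuous
  have hmem : ∀ (x : Λ) (n : ℤ), ∃ i, (f ^ n) x ∈ C i := fun x n => mem_iUnion.1 (x.2 n)
  choose π hπ using hmem
  have hcont : Continuous π := by
    refine continuous_pi fun n => continuous_iff_isClosed.2 fun s _ => ?_
    have hs : (fun x => π x n) ⁻¹' s = ⋃ i ∈ s, {x : Λ | (f ^ n) (x : Z) ∈ C i} := by
      ext x
      simp only [mem_preimage, mem_iUnion, exists_prop]
      refine ⟨fun h => ⟨_, h, hπ x n⟩, ?_⟩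
      rintro ⟨i, hi, hx⟩
      rwa [hdisj _ _ _ (hπ x n) hx]
    rw [hs]
    exact s.toFinite.isClosed_biUnion fun i _ =>
      (hC i).isClosed.preimage ((f ^ n).continuous.comp continuous_subtype_val)
  have hsurj : Function.Surjective π := by
    intro ω
    let K : ℕ → Set Z := fun m => ⋂ k ∈ Icc (-m : ℤ) m, (f ^ k) ⁻¹' C (ω k)
    have hKclosed : ∀ m, IsClosed (K m) := fun m =>
      isClosed_biInter fun k _ => (hC _).isClosed.preimage (f ^ k).continuous
    have hKsub : ∀ m, K (m + 1) ⊆ K m := fun m =>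
      biInter_mono (fun k hk => by simp only [mem_Icc] at hk ⊢; push_cast; omega)
        fun _ _ => Subset.rfl
    have hK0 : IsCompact (K 0) := by
      refine (hC (ω 0)).of_isClosed_subset (hKclosed 0) fun x hx => ?_
      have := mem_iInter₂.1 hx 0 (by simp)
      rwa [mem_preimage, hzero] at this
    have hKne : ∀ m, (K m).Nonempty := by
      intro m
      obtain ⟨x, hx⟩ := hper (2 * m + 1) fun k => ω k.valMinAbs
      have hfwd : ∀ (n : ℕ) (k : ZMod (2 * m + 1)), (f ^ (n : ℤ)) (x k) = x (k + n) := by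
        intro n
        induction n with
        | zero => intro k; simp
        | succ n ih =>
          intro k
          push_cast
          rw [hsucc, (hx k).2, ih]
          congr 1; ring
      have horb : ∀ n : ℤ, (f ^ n) (x 0) = x n := by
        intro n
        obtain ⟨n, rfl | rfl⟩ := n.eq_nat_or_neg
        · simpa using hfwd n 0
        · have h1 := hfwd n ((-n : ℤ) : ZMod (2 * m + 1))
          rw [show ((-n : ℤ) : ZMod (2 * m + 1)) + n = 0 by push_cast; ring] at h1
          rw [← h1]
          change ((f ^ (-(n : ℤ))) * (f ^ (n : ℤ))) _ = _
          rw [← zpow_add, neg_add_cancel, hzero]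
      refine ⟨x 0, mem_iInter₂.2 fun k hk => ?_⟩
      rw [mem_preimage, horb]
      have h := (hx (k : ZMod (2 * m + 1))).1
      rwa [(ZMod.valMinAbs_spec (k : ZMod (2 * m + 1)) k).2
        ⟨rfl, by simp only [mem_Icc] at hk; simp only [mem_Ioc]; push_cast; omega⟩] at h
    obtain ⟨x, hx⟩ := IsCompact.nonempty_iInter_of_sequence_nonempty_isCompact_isClosed K hKsub
      hKne hK0 hKclosed
    have hxω : ∀ n : ℤ, (f ^ n) x ∈ C (ω n) := fun n =>
      mem_iInter₂.1 (mem_iInter.1 hx n.natAbs) n (by simp only [mem_Icc]; omega)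
    refine ⟨⟨x, fun n => mem_iUnion.2 ⟨_, hxω n⟩⟩, funext fun n => ?_⟩
    exact hdisj _ _ _ (hπ _ n) (hxω n)
  refine ⟨Λ, ?_, hΛcomp, fun x hx => hx, ?_, hΛ, π, hcont, hsurj, fun x => funext fun n => ?_⟩
  · obtain ⟨x, -⟩ := hsurj fun _ => ⟨0, hN⟩
    exact ⟨x, x.2⟩
  · refine Subset.antisymm (image_subset_iff.2 hΛ) fun x hx => ⟨f.symm x, fun n => ?_, by simp⟩
    rw [← hpred]; exact hx _
  · refine hdisj _ _ _ (hπ (hΛ.restrict f Λ Λ x) n) ?_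
    have := hπ x (n + 1)
    rw [hsucc] at this
    exact this

end Dynamics

section Horseshoe

variable {E F : Type*} [NormedAddCommGroup E] [InnerProductSpace ℝ E] [FiniteDimensional ℝ E]
  [NormedAddCommGroup F] [InnerProductSpace ℝ F] [FiniteDimensional ℝ F]

/-- The fixed point property for cyclic chains of points in a product of two disks. -/
theorem exists_fixedPoint_pi_prod {A : Set E} {S : Set F} (eA : A ≃ₜ closedBall (0 : E) 1)
    (eS : S ≃ₜ closedBall (0 : F) 1) {ι : Type*} [Fintype ι] {T : (ι → A × S) → (ι → A × S)}
    (hT : Continuous T) : ∃ z, T z = z := by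
  have _ : CompactSpace A := eA.symm.compactSpace
  have _ : CompactSpace S := eS.symm.compactSpace
  have hrE := continuous_radialRetraction E
  have hrF := continuous_radialRetraction F
  refine exists_fixedPoint_of_retract (V := ι → E × F)
    (i := fun z k => ((eA (z k).1 : E), (eS (z k).2 : F)))
    (ρ := fun v k => (eA.symm (radialRetraction E (v k).1), eS.symm (radialRetraction F (v k).2)))
    (by fun_prop) (by fun_prop) (fun z => ?_) hT
  simp [radialRetraction_coe]

/-- The part of the rectangle that is mapped into the rectangle splits into `N` pieces, each
mapped homeomorphically onto `A × S` by `x ↦ ((f x).1, x.2)`. -/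
theorem exists_sections_of_slices {A : Set E} {S : Set F} (eA : A ≃ₜ closedBall (0 : E) 1)
    (eS : S ≃ₜ closedBall (0 : F) 1) (f : (E × F) ≃ₜ (E × F)) {N : ℕ}
    (hslices : ∀ s ∈ S, ∃ h : Fin N → Set (E × F), (∀ i, IsHorizontalSlice A S (h i)) ∧
      (∀ i j, i ≠ j → Disjoint (h i) (h j)) ∧ (f '' horizontalDisk A s) ∩ (A ×ˢ S) = ⋃ i, h i) :
    ∃ σ τ : Fin N → A × S → A × S, (∀ i, Continuous (σ i)) ∧ (∀ i, Continuous (τ i)) ∧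
      (∀ i y, f ((σ i y).1, (σ i y).2) = (((τ i y).1 : E), ((τ i y).2 : F))) ∧
      (∀ i y, (τ i y).1 = y.1 ∧ (σ i y).2 = y.2) ∧
      ∀ i j y y', σ i y = σ j y' → i = j := by
  have _ : CompactSpace A := eA.symm.compactSpace
  have _ : CompactSpace S := eS.symm.compactSpace
  have _ : ContractibleSpace (closedBall (0 : E) 1) := contractibleSpace_closedBall zero_le_one
  have _ : ContractibleSpace (closedBall (0 : F) 1) := contractibleSpace_closedBall zero_le_one
  have _ : ContractibleSpace A := eA.contractibleSpace
  have _ : ContractibleSpace S := eS.contractibleSpace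
  have hR : IsClosed (A ×ˢ S) :=
    (isCompact_iff_compactSpace.2 ‹_›).isClosed.prod (isCompact_iff_compactSpace.2 ‹_›).isClosed
  let j : A × S → E × F := fun x => (x.1, x.2)
  have hj : Continuous j := by fun_prop
  have hjinj : Function.Injective j := fun x y h =>
    Prod.ext (Subtype.ext (congrArg Prod.fst h)) (Subtype.ext (congrArg Prod.snd h))
  let X : Set (A × S) := {x | f (j x) ∈ A ×ˢ S}
  have hX : IsClosed X := hR.preimage (f.continuous.comp hj)
  let fX : X → A × S := fun x => (⟨(f (j x)).1, x.2.1⟩, ⟨(f (j x)).2, x.2.2⟩)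
  have hfX : Continuous fX := by
    have h : Continuous fun x : X => f (j x) := f.continuous.comp (hj.comp continuous_subtype_val)
    exact (h.fst.subtype_mk _).prodMk (h.snd.subtype_mk _)
  let g : X → A := fun x => (fX x).1
  have hg : Continuous g := hfX.fst
  have hsec : ∀ s, ∃ q : Fin N → A → A, (∀ i, Continuous (q i)) ∧
      (∀ i v, ∃ h : (q i v, s) ∈ X, g ⟨_, h⟩ = v) ∧ (∀ i j v, q i v = q j v → i = j) ∧
      ∀ x : X, x.1.2 = s → ∃ i, x.1.1 = q i (g x) := by
    intro s
    obtain ⟨h, hsl, hdisj, hun⟩ := hslices s s.2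
    choose ψ hψ hgraph using hsl
    have hpre : ∀ i (v : A), ∃ u : A, f ((u : E), (s : F)) = ((v : E), (ψ i v : F)) := by
      intro i v
      have hv : ((v : E), (ψ i v : F)) ∈ h i := by rw [hgraph]; exact ⟨v, rfl⟩
      have hv' : ((v : E), (ψ i v : F)) ∈ (f '' horizontalDisk A s) ∩ (A ×ˢ S) := by
        rw [hun]; exact mem_iUnion.2 ⟨i, hv⟩
      obtain ⟨⟨⟨u, t⟩, ⟨hu, ht⟩, hf⟩, -⟩ := hv'
      obtain rfl : t = s := ht
      exact ⟨⟨u, hu⟩, hf⟩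
    choose q hq using hpre
    refine ⟨q, fun i => ?_, fun i v => ?_, fun i k v hik => ?_, fun x hx => ?_⟩
    · have : ∀ v : A, (q i v : E) = (f.symm ((v : E), (ψ i v : F))).1 := fun v => by
        rw [← hq, f.symm_apply_apply]
      refine continuous_induced_rng.2 ?_
      rw [show Subtype.val ∘ q i = fun v : A => (f.symm ((v : E), (ψ i v : F))).1 from funext this]
      have := hψ i
      fun_prop
    · have hmem : (q i v, s) ∈ X := by
        change f ((q i v : E), (s : F)) ∈ A ×ˢ S
        rw [hq]; exact ⟨v.2, (ψ i v).2⟩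
      exact ⟨hmem, Subtype.ext (congrArg Prod.fst (hq i v))⟩
    · by_contra hne
      have h1 : ((v : E), (ψ i v : F)) ∈ h i := by rw [hgraph]; exact ⟨v, rfl⟩
      have h2 : ((v : E), (ψ i v : F)) ∈ h k := by
        rw [← hq, hik, hq, hgraph]; exact ⟨v, rfl⟩
      exact disjoint_left.1 (hdisj i k hne) h1 h2
    · have h1 : f (j x) ∈ (f '' horizontalDisk A s) ∩ (A ×ˢ S) :=
        ⟨⟨j x, ⟨x.1.1.2, congrArg Subtype.val hx⟩, rfl⟩, x.2⟩
      rw [hun] at h1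
      obtain ⟨i, hi⟩ := mem_iUnion.1 h1
      rw [hgraph] at hi
      obtain ⟨u, hu⟩ := hi
      have hgu : g x = u := Subtype.ext (congrArg Prod.fst hu)
      refine ⟨i, Subtype.ext ?_⟩
      rw [← hq] at hu
      rw [hgu]
      exact congrArg Prod.fst (f.injective hu)
  have _ : CompactSpace X := isCompact_iff_compactSpace.1 hX.isCompact
  have hp : Continuous fun x : X => (g x, x.1.2) := by fun_prop
  have hfib : ∀ y, ∃ q : Fin N → X, Function.Injective q ∧
      ∀ x : X, (g x, x.1.2) = y ↔ ∃ i, q i = x := by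
    intro y
    obtain ⟨q, -, hqs, hqd, hqe⟩ := hsec y.2
    choose hqX hqg using hqs
    refine ⟨fun i => ⟨(q i y.1, y.2), hqX i y.1⟩, fun i k h => ?_, fun x => ⟨?_, ?_⟩⟩
    · exact hqd i k y.1 (congrArg (fun x : X => x.1.1) h)
    · rintro rfl
      obtain ⟨i, hi⟩ := hqe x rfl
      exact ⟨i, Subtype.ext (Prod.ext hi.symm rfl)⟩
    · rintro ⟨i, rfl⟩
      exact Prod.ext (hqg i y.1) rfl
  obtain ⟨σ, hσ, hpσ, hσd, -⟩ := (isCoveringMap_of_card_fiber hp hfib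
    (exists_nhds_injOn_of_sections hX hg hsec fun φ₀ h h' =>
      exists_apply_eq_apply_of_dist_lt eA h h')).exists_sections hfib
  refine ⟨fun i y => (σ i y).1, fun i y => fX (σ i y), fun i => continuous_subtype_val.comp (hσ i),
    fun i => hfX.comp (hσ i), fun i y => rfl, fun i y => ?_, fun i k y y' h =>
      hσd i k y y' (Subtype.ext h)⟩
  exact Prod.mk.inj (hpσ i y)

end Horseshoe

theorem stmt_0 (nu ns : ℕ) (hnu : 1 ≤ nu) (hns : 1 ≤ ns)
    (Iu : Set (EuclideanSpace ℝ (Fin nu))) (Is : Set (EuclideanSpace ℝ (Fin ns)))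
    (hIu : IsCompactDisk Iu) (hIs : IsCompactDisk Is)
    (f : (EuclideanSpace ℝ (Fin nu) × EuclideanSpace ℝ (Fin ns)) ≃ₜ
      (EuclideanSpace ℝ (Fin nu) × EuclideanSpace ℝ (Fin ns)))
    (N : ℕ) (hN : 1 ≤ N)
    (hslices : ∀ s ∈ Is,
      ∃ h : Fin N → Set (EuclideanSpace ℝ (Fin nu) × EuclideanSpace ℝ (Fin ns)),
        (∀ i, IsHorizontalSlice Iu Is (h i)) ∧
        (∀ i j, i ≠ j → Disjoint (h i) (h j)) ∧
        (f '' horizontalDisk Iu s) ∩ (Iu ×ˢ Is) = ⋃ i, h i) :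
    ∃ Λ : Set (EuclideanSpace ℝ (Fin nu) × EuclideanSpace ℝ (Fin ns)),
      Λ.Nonempty ∧ IsCompact Λ ∧
      Λ ⊆ ⋂ n : ℤ, ⇑(f ^ n) '' (Iu ×ˢ Is) ∧
      f '' Λ = Λ ∧
      ∃ (hΛ : Set.MapsTo f Λ Λ) (π : Λ → (ℤ → Fin N)),
        Continuous π ∧ Function.Surjective π ∧
        Function.Semiconj π (hΛ.restrict f Λ Λ) (fullShift N) := by
  obtain ⟨eA⟩ := hIu
  obtain ⟨eS⟩ := hIs
  have _ : CompactSpace Iu := eA.symm.compactSpace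
  have _ : CompactSpace Is := eS.symm.compactSpace
  obtain ⟨σ, τ, hσ, hτ, hfστ, hστ, hσd⟩ := exists_sections_of_slices eA eS f hslices
  let C : Fin N → Set (EuclideanSpace ℝ (Fin nu) × EuclideanSpace ℝ (Fin ns)) := fun i =>
    range fun y =>
      (((σ i y).1 : EuclideanSpace ℝ (Fin nu)), ((σ i y).2 : EuclideanSpace ℝ (Fin ns)))
  have hCR : ⋃ i, C i ⊆ Iu ×ˢ Is := by
    refine iUnion_subset fun i => ?_
    rintro _ ⟨y, rfl⟩
    exact ⟨(σ i y).1.2, (σ i y).2.2⟩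
  have hCd : ∀ i k x, x ∈ C i → x ∈ C k → i = k := by
    rintro i k _ ⟨y, rfl⟩ ⟨y', h⟩
    exact hσd i k y y' (Prod.ext (Subtype.ext (congrArg Prod.fst h).symm)
      (Subtype.ext (congrArg Prod.snd h).symm))
  have hper : ∀ (M : ℕ) [NeZero M] (w : ZMod M → Fin N), ∃ x : ZMod M → _,
      ∀ k, x k ∈ C (w k) ∧ f (x k) = x (k + 1) := by
    intro M _ w
    obtain ⟨z, hz⟩ := exists_fixedPoint_pi_prod eA eS
      (T := fun z (k : ZMod M) => ((σ (w k) ((z (k + 1)).1, (z k).2)).1,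
        (τ (w (k - 1)) ((z k).1, (z (k - 1)).2)).2)) (by fun_prop)
    have hzσ : ∀ k, σ (w k) ((z (k + 1)).1, (z k).2) = z k := fun k => by
      refine Prod.ext ?_ (hστ _ _).2
      exact (Prod.ext_iff.1 (congrFun hz k)).1
    have hzτ : ∀ k, τ (w k) ((z (k + 1)).1, (z k).2) = z (k + 1) := fun k => by
      refine Prod.ext (hστ _ _).1 ?_
      have := congrArg Prod.snd (congrFun hz (k + 1))
      simpa using this
    refine ⟨fun k => ((z k).1, (z k).2), fun k => ⟨⟨((z (k + 1)).1, (z k).2), ?_⟩, ?_⟩⟩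
    · simp only [hzσ]
    · have := hfστ (w k) ((z (k + 1)).1, (z k).2)
      rwa [hzσ, hzτ] at this
  obtain ⟨Λ, hne, hcomp, hmem, himg, hΛ⟩ := exists_semiconj_fullShift f hN (C := C)
    (fun i => isCompact_range (by have := hσ i; fun_prop)) hCd hper
  refine ⟨Λ, hne, hcomp, fun x hx => mem_iInter.2 fun n => ⟨(f ^ (-n)) x, hCR (hmem x hx _), ?_⟩,
    himg, hΛ⟩
  change (f ^ n * f ^ (-n)) x = x
  rw [← zpow_add, add_neg_cancel, zpow_zero]
  rfl
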